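/- For all sufficiently large n ∈ ℕ, e^{h(g_A)·n} ≤ Per_n(g_A) ≤ 2e^{h(g_A)·n}, where h(g_A) = log λ; equivalently, λ^n ≤ Per_n(g_A) ≤ 2λ^n for all sufficiently large n. -/

import Mathlib

open Matrix

/-- The 2-torus ℝ²/ℤ². -/
abbrev Torus : Type := AddCircle (1:ℝ) × AddCircle (1:ℝ)

/-- The quotient map ℝ² → 𝕋². -/
noncomputable def torusMk (v : ℝ × ℝ) : Torus := (↑v.1, ↑v.2)

/-- The linear action of an integer matrix `A ∈ SL(2,ℤ)` on ℝ². -/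
noncomputable def matAct (A : Matrix.SpecialLinearGroup (Fin 2) ℤ) (v : ℝ × ℝ) : ℝ × ℝ :=
  ((A.1 0 0 : ℤ) * v.1 + (A.1 0 1 : ℤ) * v.2,
   (A.1 1 0 : ℤ) * v.1 + (A.1 1 1 : ℤ) * v.2)

/-!
A point of the quotient is fixed by `gⁿ` exactly when its lifts `x` satisfy `Aⁿ x = x` or
`Aⁿ x = -x`. It has either two lifts, which satisfy the same one of these equations, or a single
lift `x = -x`, which satisfies both; hence `2 Perₙ(g) = #ker (Aⁿ - 1) + #ker (Aⁿ + 1)`.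
The snake lemma for `0 → ℤ² → ℝ² → 𝕋² → 0` shows that an integer matrix `B` with `det B ≠ 0` has
`|det B|` torus points in its kernel. As `det (Aⁿ ∓ 1) = 2 ∓ tr Aⁿ` and `tr Aⁿ = λⁿ + λ⁻ⁿ > 2`, this
gives `Perₙ(g) = λⁿ + λ⁻ⁿ` for every `n ≥ 1`.
-/

section FinTwo

variable {R : Type*} [CommRing R]

theorem trace_pow_add_two_fin_two (A : Matrix (Fin 2) (Fin 2) R) (n : ℕ) :
    (A ^ (n + 2)).trace = A.trace * (A ^ (n + 1)).trace - A.det * (A ^ n).trace := by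
  have cayley_hamilton : A ^ 2 = A.trace • A - A.det • 1 := by
    ext i j
    fin_cases i <;> fin_cases j <;>
      simp [pow_two, Matrix.mul_apply, trace_fin_two, det_fin_two] <;> ring
  rw [pow_add, cayley_hamilton, mul_sub, mul_smul_comm, mul_smul_comm, mul_one, ← pow_succ,
    trace_sub, trace_smul, trace_smul, smul_eq_mul, smul_eq_mul]

theorem map_trace_pow_fin_two {S : Type*} [CommRing S] (φ : R →+* S)
    {A : Matrix (Fin 2) (Fin 2) R} {a b : S} (htr : φ A.trace = a + b) (hdet : φ A.det = a * b)
    (n : ℕ) : φ (A ^ n).trace = a ^ n + b ^ n := by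
  induction n using Nat.twoStepInduction with
  | zero => simp [one_add_one_eq_two, map_ofNat]
  | one => simpa using htr
  | more n ih ih_succ =>
    rw [trace_pow_add_two_fin_two, map_sub, map_mul, map_mul, htr, hdet, ih, ih_succ]
    ring

theorem det_sub_one_fin_two (M : Matrix (Fin 2) (Fin 2) R) :
    (M - 1).det = M.det - M.trace + 1 := by
  simp only [det_fin_two, trace_fin_two, Matrix.sub_apply, one_apply_eq, one_apply_ne zero_ne_one,
    one_apply_ne one_ne_zero]
  ring

theorem det_add_one_fin_two (M : Matrix (Fin 2) (Fin 2) R) :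
    (M + 1).det = M.det + M.trace + 1 := by
  simp only [det_fin_two, trace_fin_two, Matrix.add_apply, one_apply_eq, one_apply_ne zero_ne_one,
    one_apply_ne one_ne_zero]
  ring

end FinTwo

theorem two_lt_add_inv {K : Type*} [Field K] [LinearOrder K] [IsStrictOrderedRing K] {x : K}
    (hx : 1 < x) : 2 < x + x⁻¹ := by
  have hx0 : 0 < x := one_pos.trans hx
  have hsq : 0 < (x - 1) ^ 2 / x := div_pos (pow_pos (sub_pos.2 hx) 2) hx0
  have expand : (x - 1) ^ 2 / x = x + x⁻¹ - 2 := by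
    field_simp
    ring
  linarith

section Involution

open Function

variable {X Y : Type*} {σ : X → X} {π : X → Y}

-- A section `s` of `π` and its flip `σ ∘ s` cover the preimage and meet where `σ` fixes points.
theorem ncard_preimage_add_ncard_preimage_inter_fixedPoints (hπsurj : Surjective π)
    (hπ : ∀ x y, π x = π y ↔ x = y ∨ x = σ y) {P : Set Y} (hP : P.Finite) :
    (π ⁻¹' P).ncard + (π ⁻¹' P ∩ fixedPoints σ).ncard = 2 * P.ncard := by
  obtain ⟨s, hs⟩ := hπsurj.hasRightInverse
  have hσs : RightInverse (σ ∘ s) π := fun y => ((hπ _ _).2 (.inr rfl)).trans (hs y)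
  have preimage_eq : π ⁻¹' P = s '' P ∪ (σ ∘ s) '' P := by
    ext x
    constructor
    · intro hx
      rcases (hπ x (s (π x))).1 (hs _).symm with h | h
      · exact .inl ⟨π x, hx, h.symm⟩
      · exact .inr ⟨π x, hx, h.symm⟩
    · rintro (⟨y, hy, rfl⟩ | ⟨y, hy, rfl⟩)
      · simpa [hs y] using hy
      · exact Set.mem_preimage.2 ((hσs y).symm ▸ hy)
  have inter_eq : π ⁻¹' P ∩ fixedPoints σ = s '' P ∩ (σ ∘ s) '' P := by
    ext x
    constructor
    · rintro ⟨hx, hfix⟩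
      have hxs : s (π x) = x := ((hπ _ x).1 (hs _)).elim id fun h => h.trans hfix
      exact ⟨⟨π x, hx, hxs⟩, π x, hx, (congrArg σ hxs).trans hfix⟩
    · rintro ⟨⟨y, hy, rfl⟩, z, -, hz⟩
      obtain rfl : z = y := by rw [← hσs z, hz, hs]
      exact ⟨by simpa [hs z] using hy, hz⟩
  rw [inter_eq, preimage_eq, Set.ncard_union_add_ncard_inter _ _ (hP.image _) (hP.image _),
    Set.ncard_image_of_injective _ hs.injective, Set.ncard_image_of_injective _ hσs.injective,
    two_mul]

theorem ncard_fixedPoints_add_ncard_eq_involution (hπsurj : Surjective π)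
    (hπ : ∀ x y, π x = π y ↔ x = y ∨ x = σ y) {f : X → X} {g : Y → Y} (hfg : Semiconj π f g)
    (hfix : (fixedPoints f).Finite) (hflip : {x | f x = σ x}.Finite) :
    (fixedPoints f).ncard + {x | f x = σ x}.ncard = 2 * (fixedPoints g).ncard := by
  have preimage_eq : π ⁻¹' fixedPoints g = fixedPoints f ∪ {x | f x = σ x} := by
    ext x
    exact (congrArg (· = π x) (hfg x)).symm.to_iff.trans (hπ (f x) x)
  have inter_eq : π ⁻¹' fixedPoints g ∩ fixedPoints σ = fixedPoints f ∩ {x | f x = σ x} := by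
    rw [preimage_eq]
    ext x
    simp only [Set.mem_inter_iff, Set.mem_union, mem_fixedPoints, IsFixedPt, Set.mem_ofPred_eq]
    grind
  have hg : (fixedPoints g).Finite := by
    refine .of_preimage ?_ hπsurj
    rw [preimage_eq]
    exact hfix.union hflip
  rw [← ncard_preimage_add_ncard_preimage_inter_fixedPoints hπsurj hπ hg, inter_eq, preimage_eq,
    Set.ncard_union_add_ncard_inter _ _ hfix hflip]

end Involution

section Torus

open Function
open scoped Matrix.Module

-- The snake lemma for the endomorphism `(a, b, c)` of `0 → L → V → T → 0`, whose middle term has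
-- trivial kernel and cokernel: the kernel of `c` is the cokernel of `a`.
theorem card_ker_eq_index_range_of_exact {L V T : Type*} [AddGroup L] [AddGroup V] [AddGroup T]
    {i : L →+ V} {q : V →+ T} (hi : Injective i) (hq : Surjective q) (hiq : Exact i q)
    {a : L →+ L} {b : V →+ V} {c : T →+ T} (hab : b.comp i = i.comp a)
    (hbc : c.comp q = q.comp b) (hb : Bijective b) :
    Nat.card c.ker = a.range.index := by
  have ker_eq : q.ker = i.range := AddMonoidHom.exact_iff.1 hiq
  have ker_eq_map : c.ker = (q.ker.comap b).map q := by
    rw [AddMonoidHom.comap_ker, ← hbc, ← AddMonoidHom.comap_ker,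
      AddSubgroup.map_comap_eq_self_of_surjective hq]
  have map_range_eq : i.range.map b = a.range.map i := by
    rw [AddMonoidHom.map_range, hab, ← AddMonoidHom.map_range]
  calc Nat.card c.ker
      = q.ker.relIndex (q.ker.comap b) := by rw [ker_eq_map, AddSubgroup.relIndex_ker]
    _ = (q.ker.map b).relIndex q.ker := by
        rw [← AddSubgroup.relIndex_map_map_of_injective _ _ hb.1,
          AddSubgroup.map_comap_eq_self_of_surjective hb.2]
    _ = (a.range.map i).relIndex (AddSubgroup.map i ⊤) := by
        rw [ker_eq, map_range_eq, ← AddMonoidHom.range_eq_map i]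
    _ = a.range.index := by
        rw [AddSubgroup.relIndex_map_map_of_injective _ _ hi, AddSubgroup.relIndex_top_right]

variable {ι : Type*} [Fintype ι] [DecidableEq ι] {𝕜 : Type*} [Field 𝕜] [CharZero 𝕜] {p : 𝕜}

theorem index_range_smul_int {B : Matrix ι ι ℤ} (hB : B.det ≠ 0) :
    (DistribSMul.toAddMonoidHom (ι → ℤ) B).range.index = B.det.natAbs := by
  have hinj : Injective B.toLin' := Matrix.mulVec_injective_of_det_ne_zero hB
  rw [← LinearMap.det_toLin']
  exact (Submodule.natAbs_det_equiv _ (LinearEquiv.ofInjective _ hinj)).symm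

theorem bijective_smul_of_det_ne_zero {B : Matrix ι ι ℤ} (hB : B.det ≠ 0) :
    Bijective fun v : ι → 𝕜 => B • v := by
  have smul_eq_mulVec : (fun v : ι → 𝕜 => B • v) = (B.map (Int.cast : ℤ → 𝕜)).mulVec := by
    ext v j
    simp [mulVec, dotProduct]
  have isUnit_map : IsUnit (B.map (Int.cast : ℤ → 𝕜)) := by
    rw [isUnit_iff_isUnit_det, ← Int.cast_det, isUnit_iff_ne_zero]
    exact_mod_cast hB
  rw [smul_eq_mulVec]
  exact ⟨mulVec_injective_iff_isUnit.2 isUnit_map, mulVec_surjective_iff_isUnit.2 isUnit_map⟩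

theorem ncard_addCircle_smul_eq_zero (hp : p ≠ 0) {B : Matrix ι ι ℤ} (hB : B.det ≠ 0) :
    {x : ι → AddCircle p | B • x = 0}.ncard = B.det.natAbs := by
  let i : (ι → ℤ) →ₗ[Matrix ι ι ℤ] (ι → 𝕜) := (LinearMap.toSpanSingleton ℤ 𝕜 p).mapMatrixModule ι
  let q : (ι → 𝕜) →ₗ[Matrix ι ι ℤ] (ι → AddCircle p) :=
    (QuotientAddGroup.mk' (AddSubgroup.zmultiples p)).toIntLinearMap.mapMatrixModule ι
  have hi : Injective i := (smul_left_injective ℤ hp).comp_left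
  have hq : Surjective q := (QuotientAddGroup.mk'_surjective _).comp_left
  have hiq : Exact i q := by
    intro v
    have coord (j : ι) : q v j = 0 ↔ ∃ m : ℤ, m • p = v j :=
      (QuotientAddGroup.eq_zero_iff _).trans AddSubgroup.mem_zmultiples_iff
    simp only [funext_iff, Pi.zero_apply, coord, Set.mem_range]
    exact Classical.skolem
  rw [← index_range_smul_int hB]
  exact card_ker_eq_index_range_of_exact (i := i.toAddMonoidHom) (q := q.toAddMonoidHom)
    (b := DistribSMul.toAddMonoidHom (ι → 𝕜) B)
    (c := DistribSMul.toAddMonoidHom (ι → AddCircle p) B) hi hq hiq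
    (AddMonoidHom.ext fun v => (i.map_smul B v).symm)
    (AddMonoidHom.ext fun v => (q.map_smul B v).symm)
    (bijective_smul_of_det_ne_zero hB)

theorem two_mul_ncard_fixedPoints_eq_natAbs_det (hp : p ≠ 0)
    {Y : Type*} {π : (ι → AddCircle p) → Y} (hπsurj : Surjective π)
    (hπ : ∀ x y, π x = π y ↔ x = y ∨ x = -y) {M : Matrix ι ι ℤ} {g : Y → Y}
    (hMg : Semiconj π (M • ·) g) (hsub : (M - 1).det ≠ 0) (hadd : (M + 1).det ≠ 0) :
    2 * (fixedPoints g).ncard = (M - 1).det.natAbs + (M + 1).det.natAbs := by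
  have fixed_eq : fixedPoints (fun x : ι → AddCircle p => M • x) = {x | (M - 1) • x = 0} := by
    ext x
    simp only [mem_fixedPoints, IsFixedPt, Set.mem_ofPred_eq, sub_smul, one_smul, sub_eq_zero]
  have flipped_eq : {x : ι → AddCircle p | M • x = -x} = {x | (M + 1) • x = 0} := by
    ext x
    simp only [Set.mem_ofPred_eq, add_smul, one_smul, add_eq_zero_iff_eq_neg]
  have ncard_fixed := ncard_addCircle_smul_eq_zero hp hsub
  have ncard_flipped := ncard_addCircle_smul_eq_zero hp hadd
  rw [← fixed_eq] at ncard_fixed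
  rw [← flipped_eq] at ncard_flipped
  rw [← ncard_fixed, ← ncard_flipped]
  refine (ncard_fixedPoints_add_ncard_eq_involution hπsurj hπ hMg ?_ ?_).symm
  · exact Set.finite_of_ncard_ne_zero (ncard_fixed ▸ Int.natAbs_ne_zero.2 hsub)
  · exact Set.finite_of_ncard_ne_zero (ncard_flipped ▸ Int.natAbs_ne_zero.2 hadd)

theorem ncard_fixedPoints_eq_trace (hp : p ≠ 0)
    {Y : Type*} {π : (Fin 2 → AddCircle p) → Y} (hπsurj : Surjective π)
    (hπ : ∀ x y, π x = π y ↔ x = y ∨ x = -y) {M : Matrix (Fin 2) (Fin 2) ℤ} {g : Y → Y}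
    (hMg : Semiconj π (M • ·) g) (hdet : M.det = 1) (htr : 2 < M.trace) :
    ((fixedPoints g).ncard : ℤ) = M.trace := by
  have hsub := det_sub_one_fin_two M
  have hadd := det_add_one_fin_two M
  have two_mul_ncard := two_mul_ncard_fixedPoints_eq_natAbs_det hp hπsurj hπ hMg (by lia) (by lia)
  lia

end Torus

section QuotientOfTorus

open Function
open scoped Matrix.Module

theorem semiconj_finTwoArrowEquiv {A : Matrix.SpecialLinearGroup (Fin 2) ℤ} {f : Torus → Torus}
    (hf : ∀ v : ℝ × ℝ, f (torusMk v) = torusMk (matAct A v)) :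
    Semiconj (finTwoArrowEquiv (AddCircle (1 : ℝ))) (A.1 • ·) f := by
  intro x
  obtain ⟨v, rfl⟩ := QuotientAddGroup.mk_surjective.comp_left x
  simpa [torusMk, matAct, ← zsmul_eq_mul] using (hf (v 0, v 1)).symm

theorem ncard_fixedPoints_iterate_eq_pow_add_inv (A : Matrix.SpecialLinearGroup (Fin 2) ℤ) {lam : ℝ}
    (hlam : 1 < lam) (htr : ((A.1 0 0 : ℤ) : ℝ) + ((A.1 1 1 : ℤ) : ℝ) = lam + lam⁻¹)
    {f : Torus → Torus} (hf : ∀ v : ℝ × ℝ, f (torusMk v) = torusMk (matAct A v))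
    {Y : Type*} {π : Torus → Y} (hπsurj : Surjective π)
    (hπ : ∀ x y : Torus, π x = π y ↔ (x = y ∨ x = -y)) {g : Y → Y} (hfg : Semiconj π f g)
    {n : ℕ} (hn : n ≠ 0) :
    ((fixedPoints g^[n]).ncard : ℝ) = lam ^ n + (lam ^ n)⁻¹ := by
  have trace_pow : (((A.1 ^ n).trace : ℤ) : ℝ) = lam ^ n + (lam ^ n)⁻¹ := by
    rw [← inv_pow]
    refine map_trace_pow_fin_two (Int.castRingHom ℝ) ?_ ?_ n
    · simpa [trace_fin_two] using htr
    · simp [(one_pos.trans hlam).ne']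
  have two_lt_trace : 2 < (A.1 ^ n).trace := by
    exact_mod_cast trace_pow ▸ two_lt_add_inv (one_lt_pow₀ hlam hn)
  have det_pow : (A.1 ^ n).det = 1 := by rw [Matrix.det_pow, A.2, one_pow]
  let e := finTwoArrowEquiv (AddCircle (1 : ℝ))
  have semiconj_pow : Semiconj (π ∘ e) (A.1 ^ n • ·) g^[n] := by
    simpa only [smul_iterate] using
      (hfg.comp_left (semiconj_finTwoArrowEquiv hf)).iterate_right n
  have hπe (x y) : (π ∘ e) x = (π ∘ e) y ↔ x = y ∨ x = -y :=
    (hπ (e x) (e y)).trans (or_congr e.apply_eq_iff_eq (e.apply_eq_iff_eq (y := -y)))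
  rw [← trace_pow]
  exact_mod_cast ncard_fixedPoints_eq_trace one_ne_zero (hπsurj.comp e.surjective) hπe
    semiconj_pow det_pow two_lt_trace

theorem periodic_points_quotient_bounds_general
    (A : Matrix.SpecialLinearGroup (Fin 2) ℤ) {lam : ℝ} (hlam : 1 < lam)
    (htr : ((A.1 0 0 : ℤ) : ℝ) + ((A.1 1 1 : ℤ) : ℝ) = lam + lam⁻¹)
    {f : Torus → Torus} (hf : ∀ v : ℝ × ℝ, f (torusMk v) = torusMk (matAct A v))
    {Y : Type*} {π : Torus → Y} (hπsurj : Surjective π)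
    (hπ : ∀ x y : Torus, π x = π y ↔ (x = y ∨ x = -y)) {g : Y → Y} (hfg : Semiconj π f g)
    {n : ℕ} (hn : n ≠ 0) :
    lam ^ n ≤ (Nat.card {y : Y | g^[n] y = y} : ℝ) ∧
      (Nat.card {y : Y | g^[n] y = y} : ℝ) ≤ 2 * lam ^ n := by
  have card_eq : (Nat.card {y : Y | g^[n] y = y} : ℝ) = lam ^ n + (lam ^ n)⁻¹ :=
    ncard_fixedPoints_iterate_eq_pow_add_inv A hlam htr hf hπsurj hπ hfg hn
  have one_le_pow : 1 ≤ lam ^ n := one_le_pow₀ hlam.le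
  have inv_pos : 0 < (lam ^ n)⁻¹ := inv_pos.2 (one_pos.trans_le one_le_pow)
  have inv_le_one : (lam ^ n)⁻¹ ≤ 1 := inv_le_one_of_one_le₀ one_le_pow
  rw [card_eq]
  exact ⟨by linarith, by linarith⟩

end QuotientOfTorus

open Filter in
/-- for all sufficiently large `n`,
`e^{h(g_A)·n} = λ^n ≤ Per_n(g_A) ≤ 2λ^n = 2e^{h(g_A)·n}` (with `h(g_A) = log λ`). -/
theorem periodic_points_quotient_bounds
    (A : Matrix.SpecialLinearGroup (Fin 2) ℤ)
    (lam : ℝ) (hlam : 1 < lam)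
    (htr : ((A.1 0 0 : ℤ) : ℝ) + ((A.1 1 1 : ℤ) : ℝ) = lam + lam⁻¹)
    (fA : Torus ≃ₜ Torus)
    (hfA : ∀ v : ℝ × ℝ, fA (torusMk v) = torusMk (matAct A v))
    (S2 : Type) [MetricSpace S2] [CompactSpace S2]
    (π : Torus → S2) (hπcont : Continuous π) (hπsurj : Function.Surjective π)
    (hπ : ∀ x y : Torus, π x = π y ↔ (x = y ∨ x = -y))
    (gA : S2 ≃ₜ S2) (hgA : ∀ x : Torus, gA (π x) = π (fA x)) :
    ∀ᶠ n : ℕ in atTop,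
      lam ^ n ≤ (Nat.card {y : S2 | gA^[n] y = y} : ℝ) ∧
      (Nat.card {y : S2 | gA^[n] y = y} : ℝ) ≤ 2 * lam ^ n := by
  filter_upwards [eventually_ne_atTop 0] with n hn
  exact periodic_points_quotient_bounds_general A hlam htr hfA hπsurj hπ (fun x => (hgA x).symm) hn
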